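/- At every point (x,ξ) with ξ ≠ 0 one has Re τ = 0 and Im τ = (1/2)( Σ_{j=1}^d ∂_{ξ_j}λ⁽¹⁾ ∂_{x_j}h⁽²⁾ − Σ_{j=1}^d ∂_{ξ_j}h⁽²⁾ ∂_{x_j}λ⁽¹⁾ ). -/

import Mathlib

/-- Partial derivative in the `j`-th coordinate direction. -/
noncomputable def pd {d : ℕ} (j : Fin d) (f : EuclideanSpace ℝ (Fin d) → ℝ)
    (x : EuclideanSpace ℝ (Fin d)) : ℝ :=
  fderiv ℝ f x (EuclideanSpace.single j 1)

lemma aux_smooth {d : ℕ} (f : EuclideanSpace ℝ (Fin d) → EuclideanSpace ℝ (Fin d) → ℝ)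
    (hf : ContDiffOn ℝ 2
      (fun p : EuclideanSpace ℝ (Fin d) × EuclideanSpace ℝ (Fin d) => f p.1 p.2)
      {p : EuclideanSpace ℝ (Fin d) × EuclideanSpace ℝ (Fin d) | p.2 ≠ 0})
    (j : Fin d) (x ξ : EuclideanSpace ℝ (Fin d)) (hξ : ξ ≠ 0) :
    (∀ y, DifferentiableAt ℝ (fun ξ' => f y ξ') ξ) ∧
    DifferentiableAt ℝ (fun x' => f x' ξ) x ∧
    DifferentiableAt ℝ (fun x' => pd j (fun ξ' => f x' ξ') ξ) x := by
  have hopen : IsOpen {p : EuclideanSpace ℝ (Fin d) × EuclideanSpace ℝ (Fin d) | p.2 ≠ 0} :=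
    isOpen_ne.preimage continuous_snd
  have hC : ∀ y, ContDiffAt ℝ 2
      (fun p : EuclideanSpace ℝ (Fin d) × EuclideanSpace ℝ (Fin d) => f p.1 p.2) (y, ξ) :=
    fun y => hf.contDiffAt (hopen.mem_nhds hξ)
  have hD : ∀ y, DifferentiableAt ℝ
      (fun p : EuclideanSpace ℝ (Fin d) × EuclideanSpace ℝ (Fin d) => f p.1 p.2) (y, ξ) :=
    fun y => (hC y).differentiableAt (by norm_num)
  have hcomp : ∀ y, HasFDerivAt (fun ξ' => f y ξ')
      ((fderiv ℝ (fun p : EuclideanSpace ℝ (Fin d) × EuclideanSpace ℝ (Fin d) => f p.1 p.2)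
        (y, ξ)).comp (ContinuousLinearMap.inr ℝ _ _)) ξ := fun y =>
    HasFDerivAt.comp (g := fun p : EuclideanSpace ℝ (Fin d) × EuclideanSpace ℝ (Fin d) =>
      f p.1 p.2) ξ (hD y).hasFDerivAt (hasFDerivAt_prodMk_right y ξ)
  refine ⟨fun y => (hcomp y).differentiableAt, ?_, ?_⟩
  · exact (HasFDerivAt.comp (g := fun p : EuclideanSpace ℝ (Fin d) × EuclideanSpace ℝ (Fin d) =>
      f p.1 p.2) (f := fun e => (e, ξ)) x (hD x).hasFDerivAt (hasFDerivAt_prodMk_left x ξ)).differentiableAt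
  · have h1 : DifferentiableAt ℝ (fderiv ℝ
        (fun p : EuclideanSpace ℝ (Fin d) × EuclideanSpace ℝ (Fin d) => f p.1 p.2)) (x, ξ) :=
      ((hC x).fderiv_right (m := 1) (by norm_num)).differentiableAt (by norm_num)
    have h2 := (HasFDerivAt.comp (g := fderiv ℝ
        (fun p : EuclideanSpace ℝ (Fin d) × EuclideanSpace ℝ (Fin d) => f p.1 p.2)) (f := fun e => (e, ξ)) x
        h1.hasFDerivAt (hasFDerivAt_prodMk_left x ξ)).differentiableAt
    have h3 := h2.clm_apply (differentiableAt_const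
      ((0, EuclideanSpace.single j 1) : EuclideanSpace ℝ (Fin d) × EuclideanSpace ℝ (Fin d)))
    refine h3.congr_of_eventuallyEq (Filter.Eventually.of_forall fun y => ?_)
    simp only [pd]
    rw [(hcomp y).fderiv]
    simp

lemma pd_mul {d : ℕ} (j : Fin d) (f g : EuclideanSpace ℝ (Fin d) → ℝ)
    (x : EuclideanSpace ℝ (Fin d)) (hf : DifferentiableAt ℝ f x) (hg : DifferentiableAt ℝ g x) :
    pd j (fun y => f y * g y) x = f x * pd j g x + g x * pd j f x := by
  simp only [pd]
  rw [fderiv_fun_mul hf hg]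
  simp

lemma pd_add {d : ℕ} (j : Fin d) (f g : EuclideanSpace ℝ (Fin d) → ℝ)
    (x : EuclideanSpace ℝ (Fin d)) (hf : DifferentiableAt ℝ f x) (hg : DifferentiableAt ℝ g x) :
    pd j (fun y => f y + g y) x = pd j f x + pd j g x := by
  simp only [pd]
  rw [fderiv_fun_add hf hg]
  simp

lemma pd_pd_mul {d : ℕ} (f g : EuclideanSpace ℝ (Fin d) → EuclideanSpace ℝ (Fin d) → ℝ)
    (hf : ContDiffOn ℝ 2
      (fun p : EuclideanSpace ℝ (Fin d) × EuclideanSpace ℝ (Fin d) => f p.1 p.2)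
      {p : EuclideanSpace ℝ (Fin d) × EuclideanSpace ℝ (Fin d) | p.2 ≠ 0})
    (hg : ContDiffOn ℝ 2
      (fun p : EuclideanSpace ℝ (Fin d) × EuclideanSpace ℝ (Fin d) => g p.1 p.2)
      {p : EuclideanSpace ℝ (Fin d) × EuclideanSpace ℝ (Fin d) | p.2 ≠ 0})
    (j : Fin d) (x ξ : EuclideanSpace ℝ (Fin d)) (hξ : ξ ≠ 0) :
    pd j (fun x' => pd j (fun ξ' => f x' ξ' * g x' ξ') ξ) x =
      f x ξ * pd j (fun x' => pd j (fun ξ' => g x' ξ') ξ) x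
      + pd j (fun ξ' => g x ξ') ξ * pd j (fun x' => f x' ξ) x
      + (g x ξ * pd j (fun x' => pd j (fun ξ' => f x' ξ') ξ) x
      + pd j (fun ξ' => f x ξ') ξ * pd j (fun x' => g x' ξ) x) := by
  obtain ⟨f1, f2, f3⟩ := aux_smooth f hf j x ξ hξ
  obtain ⟨g1, g2, g3⟩ := aux_smooth g hg j x ξ hξ
  have : (fun x' => pd j (fun ξ' => f x' ξ' * g x' ξ') ξ) = fun x' =>
      f x' ξ * pd j (fun ξ' => g x' ξ') ξ + g x' ξ * pd j (fun ξ' => f x' ξ') ξ := by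
    funext y
    exact pd_mul j _ _ ξ (f1 y) (g1 y)
  rw [this, pd_add j _ _ x (f2.fun_mul g3) (g2.fun_mul f3), pd_mul j _ _ x f2 g3, pd_mul j _ _ x g2 f3]

/-- The symbol `τ` arising in the construction of the symmetrizer is purely imaginary,
with imaginary part `(1/2)(Σ ∂_ξλ⁽¹⁾∂_xh⁽²⁾ − Σ ∂_ξh⁽²⁾∂_xλ⁽¹⁾)`. -/
theorem tau_real_and_imaginary_parts
    (d : ℕ) (hd : 1 ≤ d)
    (h2 lam1 gam : EuclideanSpace ℝ (Fin d) → EuclideanSpace ℝ (Fin d) → ℝ)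
    (hh2smooth : ContDiffOn ℝ 2
      (fun p : EuclideanSpace ℝ (Fin d) × EuclideanSpace ℝ (Fin d) => h2 p.1 p.2)
      {p : EuclideanSpace ℝ (Fin d) × EuclideanSpace ℝ (Fin d) | p.2 ≠ 0})
    (hlam1smooth : ContDiffOn ℝ 2
      (fun p : EuclideanSpace ℝ (Fin d) × EuclideanSpace ℝ (Fin d) => lam1 p.1 p.2)
      {p : EuclideanSpace ℝ (Fin d) × EuclideanSpace ℝ (Fin d) | p.2 ≠ 0})
    (hgamsmooth : ContDiffOn ℝ 2
      (fun p : EuclideanSpace ℝ (Fin d) × EuclideanSpace ℝ (Fin d) => gam p.1 p.2)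
      {p : EuclideanSpace ℝ (Fin d) × EuclideanSpace ℝ (Fin d) | p.2 ≠ 0})
    (hgampos : ∀ x ξ, ξ ≠ 0 → 0 < gam x ξ)
    (hgamsq : ∀ x ξ, ξ ≠ 0 → (gam x ξ) ^ 2 = h2 x ξ * lam1 x ξ)
    (h1 : EuclideanSpace ℝ (Fin d) → EuclideanSpace ℝ (Fin d) → ℂ)
    (hh1 : ∀ x ξ, h1 x ξ = -(Complex.I / 2)
      * ((∑ j, pd j (fun x' => pd j (fun ξ' => h2 x' ξ') ξ) x : ℝ) : ℂ))
    (lam0 gam12 : EuclideanSpace ℝ (Fin d) → EuclideanSpace ℝ (Fin d) → ℂ)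
    (hlam0im : ∀ x ξ, ξ ≠ 0 → (lam0 x ξ).im
      = -(1 / 2) * ∑ j, pd j (fun x' => pd j (fun ξ' => lam1 x' ξ') ξ) x)
    (hgam12im : ∀ x ξ, ξ ≠ 0 → (gam12 x ξ).im
      = -(1 / 2) * ∑ j, pd j (fun x' => pd j (fun ξ' => gam x' ξ') ξ) x)
    (hgam12re : ∀ x ξ, ξ ≠ 0 → (gam12 x ξ).re
      = h2 x ξ * (lam0 x ξ).re / (2 * gam x ξ))
    (τ : EuclideanSpace ℝ (Fin d) → EuclideanSpace ℝ (Fin d) → ℂ)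
    (hτ : ∀ x ξ, τ x ξ
      = (1 / Complex.I)
          * ((∑ j, pd j (fun ξ' => h2 x ξ') ξ * pd j (fun x' => lam1 x' ξ) x : ℝ) : ℂ)
        + h1 x ξ * ((lam1 x ξ : ℝ) : ℂ)
        + ((h2 x ξ : ℝ) : ℂ) * lam0 x ξ
        - 2 * gam12 x ξ * ((gam x ξ : ℝ) : ℂ)
        + Complex.I
          * ((∑ j, pd j (fun ξ' => gam x ξ') ξ * pd j (fun x' => gam x' ξ) x : ℝ) : ℂ)) :
    ∀ (x ξ : EuclideanSpace ℝ (Fin d)), ξ ≠ 0 →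
      (τ x ξ).re = 0 ∧
      (τ x ξ).im = (1 / 2) *
        ((∑ j, pd j (fun ξ' => lam1 x ξ') ξ * pd j (fun x' => h2 x' ξ) x)
          - ∑ j, pd j (fun ξ' => h2 x ξ') ξ * pd j (fun x' => lam1 x' ξ) x) := by
  intro x ξ hξ
  have hg := hgampos x ξ hξ
  have key : ∀ j, gam x ξ * pd j (fun x' => pd j (fun ξ' => gam x' ξ') ξ) x
      + pd j (fun ξ' => gam x ξ') ξ * pd j (fun x' => gam x' ξ) x
      = (1 / 2) * (h2 x ξ * pd j (fun x' => pd j (fun ξ' => lam1 x' ξ') ξ) x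
      + pd j (fun ξ' => lam1 x ξ') ξ * pd j (fun x' => h2 x' ξ) x
      + (lam1 x ξ * pd j (fun x' => pd j (fun ξ' => h2 x' ξ') ξ) x
      + pd j (fun ξ' => h2 x ξ') ξ * pd j (fun x' => lam1 x' ξ) x)) := by
    intro j
    have e1 := pd_pd_mul gam gam hgamsmooth hgamsmooth j x ξ hξ
    have e2 := pd_pd_mul h2 lam1 hh2smooth hlam1smooth j x ξ hξ
    have e3 : (fun x' => pd j (fun ξ' => gam x' ξ' * gam x' ξ') ξ)
        = fun x' => pd j (fun ξ' => h2 x' ξ' * lam1 x' ξ') ξ := by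
      funext y
      simp only [pd]
      rw [Filter.EventuallyEq.fderiv_eq]
      filter_upwards [isOpen_ne.mem_nhds hξ] with η hη
      rw [← hgamsq y η hη, sq]
    rw [e3, e2] at e1
    linarith
  have S := Finset.sum_congr (rfl : (Finset.univ : Finset (Fin d)) = Finset.univ)
    (fun j _ => key j)
  simp only [Finset.sum_add_distrib, ← Finset.mul_sum] at S
  have a1 := hlam0im x ξ hξ
  have a2 := hgam12im x ξ hξ
  have a3 := hgam12re x ξ hξ
  rw [hτ, hh1]
  constructor
  · simp [-Complex.ofReal_sum, a3]
    field_simp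
    ring
  · simp [-Complex.ofReal_sum, a1, a2]
    linarith
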